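/- Let H be a Hilbert space, T : H → H a densely defined closed operator with T(Dom T ∩ Range T) = 0 in the sense that Range(T) ⊆ Ker(T) (so T is a differential), and assume Range(T) is closed and Ker(T)/Range(T) is finite dimensional. Then there exists a bounded operator G : H → H (the Green operator) and the orthogonal projection P onto Ker(T) ∩ Ker(T*) such that for all v ∈ Dom(T) ∩ Dom(T*): v = P v + T T* G v + T* T G v. -/

import Mathlib

/-!
Put `K = Ker T`, `R = Range T`; both are closed and `R ≤ K`, so
`H = Kᗮ ⊕ R ⊕ (K ⊓ Rᗮ)` orthogonally, and `Rᗮ = Ker T†` makes the last summand the harmonic space.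
The restriction of `T` to `Kᗮ` is a closed bijection onto `R`; its inverse, extended by zero on `Rᗮ`,
is bounded by the closed graph theorem (`exists_partialInverse`). Call it `B`. Then
`T B = proj R` and `T† B† = proj Kᗮ`, while `T B† = 0` and `T† B = 0` because `B†` takes
values in `R ≤ K` and `B` in `Kᗮ ≤ Ker T†`. Hence `G = B B† + B† B` satisfies `T G = B†`,
`T† G = B`, and `T T† G + T† T G = proj R + proj Kᗮ = 1 - P`.

All statements about unbounded operators are phrased as membership in graphs, so that sums can be
taken in the graph submodule without tracking domain proofs.
-/

open scoped InnerProductSpace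

/-- The range of a partially defined linear operator, as a submodule of the codomain. -/
noncomputable def pRange {𝕜 E F : Type*} [RCLike 𝕜]
    [NormedAddCommGroup E] [InnerProductSpace 𝕜 E]
    [NormedAddCommGroup F] [InnerProductSpace 𝕜 F]
    (T : E →ₗ.[𝕜] F) : Submodule 𝕜 F :=
  LinearMap.range T.toFun

/-- The kernel of a partially defined linear operator, as a submodule of the domain space. -/
noncomputable def pKer {𝕜 E F : Type*} [RCLike 𝕜]
    [NormedAddCommGroup E] [InnerProductSpace 𝕜 E]
    [NormedAddCommGroup F] [InnerProductSpace 𝕜 F]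
    (T : E →ₗ.[𝕜] F) : Submodule 𝕜 E :=
  (LinearMap.ker T.toFun).map T.domain.subtype

theorem mem_pKer_iff {E F : Type*} [NormedAddCommGroup E] [InnerProductSpace ℂ E]
    [NormedAddCommGroup F] [InnerProductSpace ℂ F] (T : E →ₗ.[ℂ] F) (x : E) :
    x ∈ pKer T ↔ (x, (0 : F)) ∈ T.graph := by
  rw [LinearPMap.mem_graph_iff]
  constructor
  · rintro ⟨y, hy, rfl⟩
    exact ⟨y, rfl, hy⟩
  · rintro ⟨y, rfl, hy⟩
    exact ⟨y, hy, rfl⟩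

theorem mem_pRange_iff {E F : Type*} [NormedAddCommGroup E] [InnerProductSpace ℂ E]
    [NormedAddCommGroup F] [InnerProductSpace ℂ F] (T : E →ₗ.[ℂ] F) (y : F) :
    y ∈ pRange T ↔ ∃ x, (x, y) ∈ T.graph := by
  constructor
  · rintro ⟨x, rfl⟩
    exact ⟨x, T.mem_graph x⟩
  · rintro ⟨x, hx⟩
    obtain ⟨z, -, hz⟩ := (LinearPMap.mem_graph_iff T).1 hx
    exact ⟨z, hz⟩

theorem isClosed_pKer {H : Type*} [NormedAddCommGroup H] [InnerProductSpace ℂ H]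
    (T : H →ₗ.[ℂ] H) (hclosed : IsClosed (T.graph : Set (H × H))) :
    IsClosed (pKer T : Set H) := by
  have : (pKer T : Set H) = (fun x : H => (x, (0 : H))) ⁻¹' (T.graph : Set (H × H)) := by
    ext x
    exact mem_pKer_iff T x
  rw [this]
  exact hclosed.preimage (by fun_prop)

section

variable {H : Type*} [NormedAddCommGroup H] [InnerProductSpace ℂ H] [CompleteSpace H]

theorem mem_adjoint_graph_of_forall (T : H →ₗ.[ℂ] H) (hdense : Dense (T.domain : Set H))
    {y w : H} (h : ∀ u v, (u, v) ∈ T.graph → ⟪w, u⟫_ℂ = ⟪y, v⟫_ℂ) :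
    (y, w) ∈ T.adjoint.graph := by
  have h' : ∀ x : T.domain, ⟪w, (x : H)⟫_ℂ = ⟪y, T x⟫_ℂ := fun x => h _ _ (T.mem_graph x)
  have hy := LinearPMap.mem_adjoint_domain_of_exists (T := T) y ⟨w, h'⟩
  exact (LinearPMap.mem_graph_iff _).2
    ⟨⟨y, hy⟩, rfl, LinearPMap.adjoint_apply_eq hdense ⟨y, hy⟩ h'⟩

theorem pKer_adjoint (T : H →ₗ.[ℂ] H) (hdense : Dense (T.domain : Set H)) :
    pKer T.adjoint = (pRange T)ᗮ := by
  ext y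
  rw [mem_pKer_iff, Submodule.mem_orthogonal']
  constructor
  · intro h v hv
    obtain ⟨z, hz, hz'⟩ := (LinearPMap.mem_graph_iff _).1 h
    obtain ⟨x, rfl⟩ := hv
    have := LinearPMap.adjoint_isFormalAdjoint (T := T) hdense z x
    rw [hz', inner_zero_left] at this
    change z.1 = y at hz
    rw [← hz]
    exact this.symm
  · intro h
    refine mem_adjoint_graph_of_forall T hdense fun u v huv => ?_
    rw [inner_zero_left, h v ((mem_pRange_iff T v).2 ⟨u, huv⟩)]

/-- The bounded partial inverse of a closed operator with closed range: it inverts `T` from `Kᗮ`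
to the range, where `K` is the kernel, and vanishes on the orthogonal complement of the range. -/
theorem exists_partialInverse (T : H →ₗ.[ℂ] H) (hclosed : IsClosed (T.graph : Set (H × H)))
    [(pRange T).HasOrthogonalProjection] :
    ∃ B : H →L[ℂ] H, (∀ y, B y ∈ (pKer T)ᗮ) ∧
      (∀ y, (B y, (pRange T).starProjection y) ∈ T.graph) ∧
      (∀ x y, x ∈ (pKer T)ᗮ → (x, (pRange T).starProjection y) ∈ T.graph → B y = x) := by
  have : CompleteSpace (pKer T) := (isClosed_pKer T hclosed).completeSpace_coe
  set R := pRange T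
  set K := pKer T with hK
  have uniq : ∀ x x' y, x ∈ Kᗮ → x' ∈ Kᗮ → (x, y) ∈ T.graph → (x', y) ∈ T.graph → x = x' := by
    intro x x' y hx hx' h h'
    have h1 : x - x' ∈ K := by
      rw [hK, mem_pKer_iff]
      simpa using T.graph.sub_mem h h'
    have h2 := Submodule.inner_right_of_mem_orthogonal h1 (Kᗮ.sub_mem hx hx')
    exact sub_eq_zero.1 (inner_self_eq_zero.1 h2)
  have ex : ∀ y, ∃ x, x ∈ Kᗮ ∧ (x, R.starProjection y) ∈ T.graph := by
    intro y
    obtain ⟨x, hx⟩ := (mem_pRange_iff T _).1 (R.starProjection_apply_mem y)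
    refine ⟨x - K.starProjection x, K.sub_starProjection_mem_orthogonal x, ?_⟩
    simpa using T.graph.sub_mem hx ((mem_pKer_iff T _).1 (K.starProjection_apply_mem x))
  choose f hf hf' using ex
  let L : H →ₗ[ℂ] H :=
    { toFun := f
      map_add' := fun a b => uniq _ _ _ (hf _) (Kᗮ.add_mem (hf a) (hf b)) (hf' _)
        (by simpa using T.graph.add_mem (hf' a) (hf' b))
      map_smul' := fun c a => uniq _ _ _ (hf _) (Kᗮ.smul_mem c (hf a)) (hf' _)
        (by simpa using T.graph.smul_mem c (hf' a)) }
  have hL : IsClosed (L.graph : Set (H × H)) := by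
    have : (L.graph : Set (H × H)) = (fun p : H × H => p.2) ⁻¹' (Kᗮ : Set H) ∩
        (fun p : H × H => (p.2, R.starProjection p.1)) ⁻¹' (T.graph : Set (H × H)) := by
      ext ⟨y, x⟩
      simp only [SetLike.mem_coe, LinearMap.mem_graph_iff, Set.mem_inter_iff, Set.mem_preimage]
      constructor
      · rintro rfl
        exact ⟨hf y, hf' y⟩
      · rintro ⟨h1, h2⟩
        exact uniq _ _ _ h1 (hf y) h2 (hf' y)
    rw [this]
    exact (K.isClosed_orthogonal.preimage (by fun_prop)).inter (hclosed.preimage (by fun_prop))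
  exact ⟨ContinuousLinearMap.ofIsClosedGraph hL, hf, hf',
    fun x y h1 h2 => uniq _ _ _ (hf y) h1 (hf' y) h2⟩

end

/-- Abstract Hodge–Green identity (Kashiwara–Kawai): for a densely defined closed
differential `T` (`Range T ⊆ Ker T`) with closed range and finite-dimensional cohomology
`Ker T / Range T`, there is a bounded Green operator `G` and the orthogonal projection `P`
onto the harmonic space `Ker T ∩ Ker T*` such that
`v = P v + T T* G v + T* T G v` for all `v ∈ Dom T ∩ Dom T*`. -/
theorem stmt17 {H : Type*}
    [NormedAddCommGroup H] [InnerProductSpace ℂ H] [CompleteSpace H]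
    (T : H →ₗ.[ℂ] H) (hdense : Dense (T.domain : Set H))
    (hclosed : IsClosed (T.graph : Set (H × H)))
    (hdiff : pRange T ≤ pKer T)
    (hrange : IsClosed ((pRange T : Submodule ℂ H) : Set H))
    (hfin : FiniteDimensional ℂ
      (↥(pKer T) ⧸ Submodule.comap (pKer T).subtype (pRange T))) :
    ∃ G P : H →L[ℂ] H,
      (∀ x, P x ∈ pKer T ⊓ pKer T.adjoint) ∧
      (∀ x, ∀ y ∈ pKer T ⊓ pKer T.adjoint, ⟪x - P x, y⟫_ℂ = 0) ∧
      ∀ v : H, v ∈ T.domain → v ∈ T.adjoint.domain →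
        ∃ (h₁ : G v ∈ T.domain) (h₂ : G v ∈ T.adjoint.domain)
          (h₃ : T ⟨G v, h₁⟩ ∈ T.adjoint.domain)
          (h₄ : T.adjoint ⟨G v, h₂⟩ ∈ T.domain),
          v = P v + T ⟨T.adjoint ⟨G v, h₂⟩, h₄⟩ + T.adjoint ⟨T ⟨G v, h₁⟩, h₃⟩ := by
  have : CompleteSpace (pRange T) := hrange.completeSpace_coe
  have : CompleteSpace (pKer T) := (isClosed_pKer T hclosed).completeSpace_coe
  obtain ⟨B, hBK, hBT, hBu⟩ := exists_partialInverse T hclosed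
  rw [pKer_adjoint T hdense]
  have hkerT := mem_pKer_iff T
  have hkerA := fun x => (mem_pKer_iff T.adjoint x).symm.trans (by rw [pKer_adjoint T hdense])
  have hranT := fun u v (h : (u, v) ∈ T.graph) => (mem_pRange_iff T v).2 ⟨u, h⟩
  set R := pRange T
  set K := pKer T
  set Q := Kᗮ
  have hQR : Q ≤ Rᗮ := Submodule.orthogonal_le hdiff
  have hQK : ∀ x, x - Q.starProjection x ∈ K := fun x => by
    have h := Q.sub_starProjection_mem_orthogonal x
    rwa [Submodule.orthogonal_orthogonal] at h
  have hBker : ∀ y ∈ Rᗮ, B y = 0 := fun y hy => hBu 0 y Q.zero_mem (by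
    rw [(Submodule.starProjection_apply_eq_zero_iff R).2 hy]
    exact T.graph.zero_mem)
  have hB'R : ∀ x, B.adjoint x ∈ R := fun x => by
    rw [← R.orthogonal_orthogonal, Submodule.mem_orthogonal]
    intro y hy
    rw [ContinuousLinearMap.adjoint_inner_right, hBker y hy, inner_zero_left]
  have hTB' : ∀ x, (B.adjoint x, (0 : H)) ∈ T.graph := fun x => (hkerT _).1 (hdiff (hB'R x))
  have hAB : ∀ x, (B x, (0 : H)) ∈ T.adjoint.graph := fun x => (hkerA _).2 (hQR (hBK x))
  -- `B T` is the projection onto `Kᗮ` on the domain of `T`; by duality `T† B†` is that projection.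
  have hBleft : ∀ u v, (u, v) ∈ T.graph → B v = Q.starProjection u := fun u v huv =>
    hBu _ _ (Q.starProjection_apply_mem u) (by
      rw [Submodule.starProjection_eq_self_iff.2 (hranT u v huv)]
      simpa using T.graph.sub_mem huv ((hkerT _).1 (hQK u)))
  have hAB' : ∀ x, (B.adjoint x, Q.starProjection x) ∈ T.adjoint.graph := fun x =>
    mem_adjoint_graph_of_forall T hdense fun u v huv => by
      rw [ContinuousLinearMap.adjoint_inner_left, hBleft u v huv,
        Submodule.inner_starProjection_left_eq_right]
  refine ⟨B ∘L B.adjoint + B.adjoint ∘L B, 1 - R.starProjection - Q.starProjection, ?_, ?_, ?_⟩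
  · intro x
    constructor
    · have h := K.sub_mem (hQK x) (hdiff (R.starProjection_apply_mem x))
      simpa [sub_right_comm] using h
    · exact Rᗮ.sub_mem (R.sub_starProjection_mem_orthogonal x)
        (hQR (Q.starProjection_apply_mem x))
  · rintro x y ⟨hyK, hyR⟩
    have h : x - (1 - R.starProjection - Q.starProjection) x
        = R.starProjection x + Q.starProjection x := by
      simp only [sub_apply, one_apply_eq_self]
      abel
    rw [h, inner_add_left,
      Submodule.inner_right_of_mem_orthogonal (R.starProjection_apply_mem x) hyR,
      Submodule.inner_left_of_mem_orthogonal hyK (Q.starProjection_apply_mem x), add_zero]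
  · intro v _ _
    have g1 : (B (B.adjoint v) + B.adjoint (B v), B.adjoint v) ∈ T.graph := by
      have h := T.graph.add_mem (hBT (B.adjoint v)) (hTB' (B v))
      rwa [Submodule.starProjection_eq_self_iff.2 (hB'R v), Prod.mk_add_mk, add_zero] at h
    have g2 : (B (B.adjoint v) + B.adjoint (B v), B v) ∈ T.adjoint.graph := by
      have h := T.adjoint.graph.add_mem (hAB (B.adjoint v)) (hAB' (B v))
      rwa [Submodule.starProjection_eq_self_iff.2 (hBK v), Prod.mk_add_mk, zero_add] at h
    have value : ∀ (S : H →ₗ.[ℂ] H) (x y : H), (x, y) ∈ S.graph →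
        ∃ h : x ∈ S.domain, S ⟨x, h⟩ = y := by
      intro S x y h
      obtain ⟨⟨z, hz⟩, rfl, h'⟩ := (LinearPMap.mem_graph_iff S).1 h
      exact ⟨hz, h'⟩
    obtain ⟨h₁, e₁⟩ := value _ _ _ g1
    obtain ⟨h₂, e₂⟩ := value _ _ _ g2
    obtain ⟨h₃, e₃⟩ := value _ _ _ (hAB' v)
    obtain ⟨h₄, e₄⟩ := value _ _ _ (hBT v)
    refine ⟨h₁, h₂, e₁.symm ▸ h₃, e₂.symm ▸ h₄, ?_⟩
    -- The domain proofs are generalized so that the inner values can be rewritten.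
    have e₅ : ∀ h, T ⟨T.adjoint ⟨B (B.adjoint v) + B.adjoint (B v), h₂⟩, h⟩
        = R.starProjection v := by
      rw [e₂]
      exact fun _ => e₄
    have e₆ : ∀ h, T.adjoint ⟨T ⟨B (B.adjoint v) + B.adjoint (B v), h₁⟩, h⟩
        = Q.starProjection v := by
      rw [e₁]
      exact fun _ => e₃
    refine Eq.trans ?_ (congrArg₂ (fun a b => (1 - R.starProjection - Q.starProjection) v + a + b)
      (e₅ _).symm (e₆ _).symm)
    simp only [sub_apply, one_apply_eq_self]
    abel
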